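/- arXiv:2211.12245 — 2 statements merged into one kernel-verified Lean document; each statement's English description precedes it below -/
import Mathlib

section
/- Let M ∈ GL₃(ℤ) (a 3×3 integer matrix with determinant ±1) have a real eigenvalue α with α ≠ 1 and α ≠ -1, and a nonreal complex eigenvalue β (so M is diagonalizable over ℂ with three distinct eigenvalues α, β, and the conjugate of β). Let Γ be the centralizer of M in GL₃(ℤ), i.e., the subgroup of all N ∈ GL₃(ℤ) with MN = NM. Then Γ is isomorphic, as a group, to U × ℤ for some finite group U. -/
/-!
A matrix commuting with `M` preserves the eigenlines of `α`, `β` and `conj β`, so sending it to its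
eigenvalues `(a, b, conj b)` on them embeds `Γ` into a commutative group. As `|a| * |b| ^ 2 = 1`, a
bound on `|a|` from above and below bounds all three eigenvalues, hence the integer entries of the
matrix, and leaves finitely many elements of `Γ`. Thus the values `|a|` form a discrete subgroup of
the positive reals; it is nontrivial because `|α| ≠ 1`, hence infinite cyclic. So `|a|` maps `Γ`
onto `ℤ` with finite kernel, and `Γ` splits because `ℤ` is free.
-/

open Matrix
open scoped NNReal ComplexConjugate

section Splitting

variable {G H : Type*} [Group G]

theorem exists_isLeast_one_lt_range [CommGroup H] [LinearOrder H] [IsOrderedMonoid H]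
    {f : G →* H} (hf : f ≠ 1) (hfin : ∀ a, (f ⁻¹' Set.Icc 1 a).Finite) :
    ∃ g, IsLeast {h | h ∈ f.range ∧ 1 < h} (f g) := by
  obtain ⟨x, hx⟩ : ∃ x, 1 < f x := by
    obtain ⟨x, hx⟩ : ∃ x, f x ≠ 1 := by simpa [MonoidHom.ext_iff] using hf
    rcases hx.lt_or_gt with hlt | hgt
    · exact ⟨x⁻¹, by simpa using hlt⟩
    · exact ⟨x, hgt⟩
  obtain ⟨g, ⟨hg, hgx⟩, hmin⟩ := Set.exists_min_image (f ⁻¹' Set.Ioc 1 (f x)) f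
    ((hfin (f x)).subset (Set.preimage_mono Set.Ioc_subset_Icc_self)) ⟨x, hx, le_rfl⟩
  refine ⟨g, ⟨⟨g, rfl⟩, hg⟩, ?_⟩
  rintro _ ⟨⟨y, rfl⟩, hy⟩
  rcases le_total (f y) (f x) with hyx | hxy
  · exact hmin y ⟨hy, hyx⟩
  · exact hgx.trans hxy

open scoped IsMulCommutative

variable [IsMulCommutative G]

theorem bijective_ker_subtype_coprod_zpowersHom [Group H] (f : G →* H) {g : G}
    (hrange : f.range = Subgroup.zpowers (f g)) (hg : ¬IsOfFinOrder (f g)) :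
    Function.Bijective (f.ker.subtype.coprod (zpowersHom G g)) := by
  constructor
  · rw [injective_iff_map_eq_one]
    rintro ⟨⟨u, hu⟩, k⟩ huk
    have hmul : u * g ^ k.toAdd = 1 := huk
    have hk : k.toAdd = 0 := by
      have hpow : f g ^ k.toAdd = 1 := by
        simpa [MonoidHom.mem_ker.mp hu] using congrArg f hmul
      by_contra hne
      exact hg (isOfFinOrder_iff_zpow_eq_one.mpr ⟨_, hne, hpow⟩)
    have hu1 : u = 1 := by simpa [hk] using hmul
    exact Prod.ext (Subtype.ext hu1) hk
  · intro x
    obtain ⟨k, hk⟩ : f x ∈ Subgroup.zpowers (f g) := hrange ▸ ⟨x, rfl⟩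
    have hker : x * (g ^ k)⁻¹ ∈ f.ker := by
      simpa [MonoidHom.mem_ker, mul_inv_eq_one] using hk.symm
    exact ⟨(⟨_, hker⟩, .ofAdd k), by simp⟩

theorem nonempty_mulEquiv_ker_prod_int [CommGroup H] [LinearOrder H] [IsOrderedMonoid H]
    [MulArchimedean H] {f : G →* H} (hf : f ≠ 1) (hfin : ∀ a, (f ⁻¹' Set.Icc 1 a).Finite) :
    Nonempty (G ≃* f.ker × Multiplicative ℤ) := by
  obtain ⟨g, hg⟩ := exists_isLeast_one_lt_range hf hfin
  have hrange : f.range = Subgroup.zpowers (f g) := by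
    rw [Subgroup.zpowers_eq_closure]
    exact Subgroup.cyclic_of_min hg
  have hord : ¬IsOfFinOrder (f g) := not_isOfFinOrder_of_isMulTorsionFree hg.1.2.ne'
  exact ⟨(MulEquiv.ofBijective _
    (bijective_ker_subtype_coprod_zpowersHom f hrange hord)).symm⟩

end Splitting

section Diagonalization

theorem mulVec_comp_eq_smul {n R : Type*} [Fintype n] [Semiring R] {σ : R →+* R}
    {A : Matrix n n R} (hA : A.map σ = A) {v : n → R} {μ : R} (h : A *ᵥ v = μ • v) :
    A *ᵥ (σ ∘ v) = σ μ • (σ ∘ v) := by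
  ext i
  simpa [hA, h] using (σ.map_mulVec A v i).symm

variable {n R K : Type*} [Fintype n] [DecidableEq n]

theorem isDiag_of_commute_diagonal [CommRing R] [NoZeroDivisors R] {d : n → R}
    (hd : Function.Injective d) {A : Matrix n n R} (h : Commute (diagonal d) A) : A.IsDiag := by
  intro i j hij
  have hentry : d i * A i j = A i j * d j := by
    simpa using congrFun₂ h.eq i j
  have hzero : (d i - d j) * A i j = 0 := by linear_combination hentry
  exact (mul_eq_zero.mp hzero).resolve_left (sub_ne_zero.mpr (hd.ne hij))

theorem semiconjBy_diagonal_iff_mulVec_col [CommRing R] {P A : Matrix n n R} {d : n → R} :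
    SemiconjBy P (diagonal d) A ↔ ∀ i, A *ᵥ P.col i = d i • P.col i := by
  simp only [SemiconjBy, ← Matrix.ext_iff, funext_iff, mul_diagonal, Pi.smul_apply, smul_eq_mul,
    Matrix.col_apply, mul_comm (d _)]
  exact ⟨fun h i j => (h j i).symm, fun h i j => (h j i).symm⟩

theorem semiconjBy_diagonal_of_commute [CommRing R] [NoZeroDivisors R] {P : GL n R} {d : n → R}
    (hd : Function.Injective d) {A B : Matrix n n R}
    (hA : SemiconjBy P.val (diagonal d) A) (hAB : Commute A B) :
    SemiconjBy P.val (diagonal (diag (P⁻¹.val * B * P.val))) B := by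
  set C := P⁻¹.val * B * P.val with hC
  have hB : SemiconjBy P.val C B := by
    simp [SemiconjBy, hC, mul_assoc]
  have hcomm : Commute C (diagonal d) :=
    (hA.units_inv_symm_left.mul_left hAB.symm).mul_left hA
  rwa [(isDiag_of_commute_diagonal hd hcomm.symm).diagonal_diag]

theorem det_eq_prod_of_semiconjBy_diagonal [CommRing R] {P : GL n R} {d : n → R}
    {A : Matrix n n R} (h : SemiconjBy P.val (diagonal d) A) : A.det = ∏ i, d i := by
  rw [← det_diagonal, ← det_units_conj P (diagonal d), h.eq, Units.mul_inv_cancel_right]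

theorem eq_of_semiconjBy_diagonal [CommRing R] {P : GL n R} {d d' : n → R} {A : Matrix n n R}
    (h : SemiconjBy P.val (diagonal d) A) (h' : SemiconjBy P.val (diagonal d') A) : d = d' :=
  diagonal_injective ((Units.mul_right_inj P).mp (h.eq.trans h'.eq.symm))

theorem isRoot_charpoly_map_of_aeval_eq_zero [CommRing R] [CommRing K] [Algebra R K]
    {A : Matrix n n R} {μ : K} (h : Polynomial.aeval μ A.charpoly = 0) :
    (A.map (algebraMap R K)).charpoly.IsRoot μ := by
  rwa [charpoly_map, Polynomial.IsRoot, Polynomial.eval_map_algebraMap]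

theorem exists_mulVec_eq_smul_of_isRoot_charpoly [CommRing R] [IsDomain R] {A : Matrix n n R}
    {μ : R} (h : A.charpoly.IsRoot μ) : ∃ v ≠ 0, A *ᵥ v = μ • v := by
  rw [← charpoly_toLin', ← Module.End.hasEigenvalue_iff_isRoot_charpoly] at h
  obtain ⟨v, hv⟩ := h.exists_hasEigenvector
  exact ⟨v, hv.2, hv.apply_eq_smul⟩

theorem exists_semiconjBy_diagonal [Field K] {A : Matrix n n K} {v : n → n → K} {d : n → K}
    (hd : Function.Injective d) (hv : ∀ i, v i ≠ 0) (hAv : ∀ i, A *ᵥ v i = d i • v i) :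
    ∃ P : GL n K, P.val.col = v ∧ SemiconjBy P.val (diagonal d) A := by
  have hli : LinearIndependent K v :=
    Module.End.eigenvectors_linearIndependent' (toLin' A) d hd v fun i =>
      ⟨Module.End.mem_eigenspace_iff.mpr (hAv i), hv i⟩
  obtain ⟨P, hP⟩ : IsUnit (of v)ᵀ := linearIndependent_cols_iff_isUnit.mp hli
  have hcol : P.val.col = v := by rw [hP]; rfl
  exact ⟨P, hcol, semiconjBy_diagonal_iff_mulVec_col.mpr (by simpa [hcol] using hAv)⟩

end Diagonalization

section EigenvalueHom

variable {n R K : Type*} [Fintype n] [DecidableEq n] [CommRing R] [CommRing K]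

theorem commute_map_of_mem_centralizer (φ : R →+* K) {M : GL n R}
    (N : Subgroup.centralizer {M}) : Commute (M.val.map φ) (N.1.val.map φ) := by
  have hMN : M * N = N * M := (Subgroup.mem_centralizer_singleton_iff.mp N.2).symm
  have hcomm : Commute M.val N.1.val := Units.ext_iff.mp hMN
  exact hcomm.map φ.mapMatrix

section NoZeroDivisors

variable [NoZeroDivisors K] {φ : R →+* K} {M : GL n R} {P : GL n K} {d : n → K}
  (hd : Function.Injective d)
  (hM : SemiconjBy P.val (diagonal d) (M.val.map φ))

include hd hM in
theorem semiconjBy_diagonal_of_mem_centralizer (N : Subgroup.centralizer {M}) :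
    SemiconjBy P.val (diagonal (diag (P⁻¹.val * N.1.val.map φ * P.val))) (N.1.val.map φ) :=
  semiconjBy_diagonal_of_commute hd hM (commute_map_of_mem_centralizer φ N)

/-- The joint eigenvalues of the centralizer of `M`, whose image in `GL n K` is diagonalizable with
eigenvalues `d` and eigenvectors the columns of `P`: the `i`-th coordinate sends `N` to its
eigenvalue on the `i`-th column of `P`. -/
def eigenvalueHom : Subgroup.centralizer {M} →* (n → K) where
  toFun N := diag (P⁻¹.val * N.1.val.map φ * P.val)
  map_one' := by simp
  map_mul' N N' := by
    have hmul := (semiconjBy_diagonal_of_mem_centralizer hd hM N).mul_right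
      (semiconjBy_diagonal_of_mem_centralizer hd hM N')
    rw [diagonal_mul_diagonal', ← Matrix.map_mul] at hmul
    exact eq_of_semiconjBy_diagonal
      (semiconjBy_diagonal_of_mem_centralizer hd hM (N * N')) hmul

theorem semiconjBy_diagonal_eigenvalueHom (N : Subgroup.centralizer {M}) :
    SemiconjBy P.val (diagonal (eigenvalueHom hd hM N)) (N.1.val.map φ) :=
  semiconjBy_diagonal_of_mem_centralizer hd hM N

theorem eigenvalueHom_eq_of_semiconjBy {N : Subgroup.centralizer {M}} {c : n → K}
    (h : SemiconjBy P.val (diagonal c) (N.1.val.map φ)) :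
    eigenvalueHom hd hM N = c :=
  eq_of_semiconjBy_diagonal (semiconjBy_diagonal_eigenvalueHom hd hM N) h

theorem map_eq_conj_diagonal_eigenvalueHom (N : Subgroup.centralizer {M}) :
    N.1.val.map φ = P.val * diagonal (eigenvalueHom hd hM N) * P⁻¹.val := by
  rw [(semiconjBy_diagonal_eigenvalueHom hd hM N).eq, Units.mul_inv_cancel_right]

theorem eigenvalueHom_injective (hφ : Function.Injective φ) :
    Function.Injective (eigenvalueHom hd hM) := by
  intro N N' h
  have hmap : N.1.val.map φ = N'.1.val.map φ := by
    rw [map_eq_conj_diagonal_eigenvalueHom hd hM, map_eq_conj_diagonal_eigenvalueHom hd hM, h]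
  exact Subtype.ext (Units.ext (Matrix.map_injective hφ hmap))

include hd hM in
theorem isMulCommutative_centralizer (hφ : Function.Injective φ) :
    IsMulCommutative (Subgroup.centralizer {M}) :=
  ⟨⟨fun N N' => eigenvalueHom_injective hd hM hφ (by rw [map_mul, map_mul, mul_comm])⟩⟩

theorem prod_eigenvalueHom (N : Subgroup.centralizer {M}) :
    ∏ i, eigenvalueHom hd hM N i = φ N.1.val.det := by
  rw [← det_eq_prod_of_semiconjBy_diagonal (semiconjBy_diagonal_eigenvalueHom hd hM N),
    φ.map_det, φ.mapMatrix_apply]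

end NoZeroDivisors

theorem eigenvalueHom_apply_of_col_eq [IsDomain K] {φ : R →+* K} {M : GL n R} {P : GL n K}
    {d : n → K} (hd : Function.Injective d) (hM : SemiconjBy P.val (diagonal d) (M.val.map φ))
    {σ : K →+* K} (hσ : σ.comp φ = φ) {i j : n} (hij : P.val.col j = σ ∘ P.val.col i)
    (N : Subgroup.centralizer {M}) :
    eigenvalueHom hd hM N j = σ (eigenvalueHom hd hM N i) := by
  have hN := semiconjBy_diagonal_iff_mulVec_col.mp (semiconjBy_diagonal_eigenvalueHom hd hM N)
  have hfix : (N.1.val.map φ).map σ = N.1.val.map φ := by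
    rw [Matrix.map_map, ← RingHom.coe_comp, hσ]
  have hσN := mulVec_comp_eq_smul hfix (hN i)
  rw [← hij, hN j] at hσN
  have hcol : P.val.col j ≠ 0 :=
    (linearIndependent_cols_of_isUnit P.isUnit).ne_zero j
  exact smul_left_injective K hcol hσN

end EigenvalueHom

section Norm

theorem norm_intCast_det {n : Type*} [Fintype n] [DecidableEq n] (N : GL n ℤ) :
    ‖(N.val.det : ℂ)‖ = 1 := by
  rw [Complex.norm_intCast, ← Int.norm_eq_abs]
  exact Int.norm_coe_units (GeneralLinearGroup.det N)

variable {n : Type*} [Fintype n] [DecidableEq n] {M : GL n ℤ} {P : GL n ℂ} {d : n → ℂ}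
  (hd : Function.Injective d)
  (hM : SemiconjBy P.val (diagonal d) (M.val.map (Int.castRingHom ℂ)))

theorem prod_norm_eigenvalueHom (N : Subgroup.centralizer {M}) :
    ∏ i, ‖eigenvalueHom hd hM N i‖ = 1 := by
  rw [← norm_prod, prod_eigenvalueHom, eq_intCast, norm_intCast_det]

theorem finite_setOf_norm_eigenvalueHom_le (r : ℝ) :
    {N | ∀ i, ‖eigenvalueHom hd hM N i‖ ≤ r}.Finite := by
  have hcompact : IsCompact ((fun c => P.val * diagonal c * P⁻¹.val) ''
      Set.univ.pi fun _ => Metric.closedBall 0 r) :=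
    (isCompact_univ_pi fun _ => isCompact_closedBall 0 r).image (by fun_prop)
  have hfin :=
    (Complex.isClosedEmbedding_intCast.matrix_map.isCompact_preimage hcompact).finite_of_discrete
  have hinj : Function.Injective fun N : Subgroup.centralizer {M} => N.1.val :=
    Units.val_injective.comp Subtype.val_injective
  exact (hfin.preimage hinj.injOn).subset fun N hN =>
    ⟨eigenvalueHom hd hM N, fun i _ => by simpa using hN i,
      (map_eq_conj_diagonal_eigenvalueHom hd hM N).symm⟩

/-- The absolute value of the `i`-th coordinate of `eigenvalueHom`, as a homomorphism to the ordered
group of positive reals, which is encoded as `ℝ≥0ˣ`. -/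
noncomputable def absEigenvalueHom (i : n) : Subgroup.centralizer {M} →* ℝ≥0ˣ :=
  ((nnnormHom : ℂ →*₀ ℝ≥0).toMonoidHom.comp
    ((Pi.evalMonoidHom _ i).comp (eigenvalueHom hd hM))).toHomUnits

theorem coe_absEigenvalueHom (i : n) (N : Subgroup.centralizer {M}) :
    ((absEigenvalueHom hd hM i N : ℝ≥0) : ℝ) = ‖eigenvalueHom hd hM N i‖ :=
  rfl

theorem absEigenvalueHom_ne_one {i : n} (hi : ‖d i‖ ≠ 1) : absEigenvalueHom hd hM i ≠ 1 := by
  intro h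
  let M' : Subgroup.centralizer {M} := ⟨M, Subgroup.mem_centralizer_singleton_iff.mpr rfl⟩
  have hM' : absEigenvalueHom hd hM i M' = 1 := by rw [h, MonoidHom.one_apply]
  apply hi
  rw [← eigenvalueHom_eq_of_semiconjBy hd hM (N := M') hM, ← coe_absEigenvalueHom, hM']
  simp

end Norm

section DimensionThree

theorem injective_ofReal_self_conj (α : ℝ) {β : ℂ} (hβ : β ≠ conj β) :
    Function.Injective ![(α : ℂ), β, conj β] := by
  have hαβ : (α : ℂ) ≠ β := by
    rintro rfl
    exact hβ (Complex.conj_ofReal α).symm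
  have hαβ' : (α : ℂ) ≠ conj β := fun h => hαβ (by simpa using congrArg conj h)
  simp [Function.Injective, Fin.forall_fin_succ, hαβ, hαβ', hβ, hαβ.symm, hαβ'.symm, hβ.symm]

theorem exists_semiconjBy_diagonal_fin_three {A : Matrix (Fin 3) (Fin 3) ℂ}
    (hA : A.map conj = A) {α : ℝ} (hα : A.charpoly.IsRoot α) {β : ℂ}
    (hβ : A.charpoly.IsRoot β) (hβ_ne : β ≠ conj β) :
    ∃ P : GL (Fin 3) ℂ, P.val.col 2 = conj ∘ P.val.col 1 ∧
      SemiconjBy P.val (diagonal ![(α : ℂ), β, conj β]) A := by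
  obtain ⟨v, hv, hAv⟩ := exists_mulVec_eq_smul_of_isRoot_charpoly hα
  obtain ⟨w, hw, hAw⟩ := exists_mulVec_eq_smul_of_isRoot_charpoly hβ
  have hw' : conj ∘ w ≠ 0 := by simpa [funext_iff] using hw
  have hAw' := mulVec_comp_eq_smul hA hAw
  obtain ⟨P, hcol, hP⟩ := exists_semiconjBy_diagonal (A := A) (v := ![v, w, conj ∘ w])
    (injective_ofReal_self_conj α hβ_ne) (by simp [Fin.forall_fin_succ, hv, hw, hw'])
    (by simp [Fin.forall_fin_succ, hAv, hAw, hAw'])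
  exact ⟨P, by simp [hcol], hP⟩

variable {M : GL (Fin 3) ℤ} {P : GL (Fin 3) ℂ} {d : Fin 3 → ℂ}
  (hd : Function.Injective d)
  (hM : SemiconjBy P.val (diagonal d) (M.val.map (Int.castRingHom ℂ)))
  (hP : P.val.col 2 = conj ∘ P.val.col 1)

include hP

theorem norm_eigenvalueHom_two (N : Subgroup.centralizer {M}) :
    ‖eigenvalueHom hd hM N 2‖ = ‖eigenvalueHom hd hM N 1‖ := by
  rw [eigenvalueHom_apply_of_col_eq hd hM (RingHom.ext_int _ _) hP, RCLike.norm_conj]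

theorem norm_eigenvalueHom_zero_mul_sq (N : Subgroup.centralizer {M}) :
    ‖eigenvalueHom hd hM N 0‖ * ‖eigenvalueHom hd hM N 1‖ ^ 2 = 1 := by
  rw [← prod_norm_eigenvalueHom hd hM N, Fin.prod_univ_three, norm_eigenvalueHom_two hd hM hP]
  ring

theorem norm_eigenvalueHom_le {N : Subgroup.centralizer {M}} {r : ℝ}
    (hlow : 1 ≤ ‖eigenvalueHom hd hM N 0‖) (hup : ‖eigenvalueHom hd hM N 0‖ ≤ r) (i : Fin 3) :
    ‖eigenvalueHom hd hM N i‖ ≤ r := by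
  have hone : ‖eigenvalueHom hd hM N 1‖ ≤ r := by
    have hsq : ‖eigenvalueHom hd hM N 1‖ ^ 2 ≤ 1 :=
      calc
        _ ≤ ‖eigenvalueHom hd hM N 0‖ * ‖eigenvalueHom hd hM N 1‖ ^ 2 :=
          le_mul_of_one_le_left (sq_nonneg _) hlow
        _ = 1 := norm_eigenvalueHom_zero_mul_sq hd hM hP N
    exact ((sq_le_one_iff₀ (norm_nonneg _)).mp hsq).trans (hlow.trans hup)
  fin_cases i
  · exact hup
  · exact hone
  · exact (norm_eigenvalueHom_two hd hM hP N).trans_le hone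

theorem finite_absEigenvalueHom_preimage_Icc (a : ℝ≥0ˣ) :
    (absEigenvalueHom hd hM 0 ⁻¹' Set.Icc 1 a).Finite := by
  refine (finite_setOf_norm_eigenvalueHom_le hd hM a).subset ?_
  rintro N ⟨hlow, hup⟩
  exact norm_eigenvalueHom_le hd hM hP (by exact_mod_cast hlow) (by exact_mod_cast hup)

end DimensionThree

/-- Let `M ∈ GL₃(ℤ)` have a real eigenvalue `α ≠ ±1` and a nonreal complex eigenvalue
`β`, and let `Γ` be the centralizer of `M` in `GL₃(ℤ)`. Then `Γ ≃ U × ℤ` for some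
finite group `U`. -/
theorem centralizer_GL3_iso_finite_prod_int
    (M : GL (Fin 3) ℤ)
    (α : ℝ) (hα1 : α ≠ 1) (hα2 : α ≠ -1)
    (hαroot : Polynomial.aeval α (Matrix.charpoly (M : Matrix (Fin 3) (Fin 3) ℤ)) = 0)
    (β : ℂ) (hβroot : Polynomial.aeval β (Matrix.charpoly (M : Matrix (Fin 3) (Fin 3) ℤ)) = 0)
    (hβ : β ≠ (starRingEnd ℂ) β) :
    ∃ (U : Type) (_ : Group U) (_ : Finite U),
      Nonempty ((Subgroup.centralizer ({M} : Set (GL (Fin 3) ℤ))) ≃* U × Multiplicative ℤ) := by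
  have hα : Polynomial.aeval (α : ℂ) M.val.charpoly = 0 := by
    simpa using (Polynomial.aeval_algebraMap_eq_zero_iff ℂ α M.val.charpoly).mpr hαroot
  have hreal : (M.val.map (Int.castRingHom ℂ)).map (starRingEnd ℂ) =
      M.val.map (Int.castRingHom ℂ) := by
    ext; simp
  have hd := injective_ofReal_self_conj α hβ
  obtain ⟨P, hP, hM⟩ := exists_semiconjBy_diagonal_fin_three hreal
    (isRoot_charpoly_map_of_aeval_eq_zero hα) (isRoot_charpoly_map_of_aeval_eq_zero hβroot) hβ
  have := isMulCommutative_centralizer hd hM Int.cast_injective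
  have hne : absEigenvalueHom hd hM 0 ≠ 1 := absEigenvalueHom_ne_one hd hM <| by
    simpa [abs_eq] using ⟨hα1, hα2⟩
  have hfin := finite_absEigenvalueHom_preimage_Icc hd hM hP
  have hker : Finite (absEigenvalueHom hd hM 0).ker :=
    (hfin 1).subset fun N hN => by simp [MonoidHom.mem_ker.mp hN]
  exact ⟨_, inferInstance, hker, nonempty_mulEquiv_ker_prod_int hne hfin⟩
end

section
/- Let r be a nonzero integer, and let H(r) be the group given by the presentation with generators g₁, g₂, g₃ and relations g₃g₁ = g₁g₃, g₃g₂ = g₂g₃, and g₁⁻¹g₂⁻¹g₁g₂ = g₃ʳ. Then the quotient group H(r)/Z(H(r)) of H(r) by its center is isomorphic to ℤ × ℤ (the free abelian group of rank 2). -/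
/-!
Modulo its center, `H(r)` is abelian and generated by the images of `g₁` and `g₂`. No further
relation survives: if `g₁ᵐ g₂ⁿ` is central, commuting with `g₂` forces `g₃ʳᵐ = 1` and commuting with
`g₁` forces `g₃ʳⁿ = 1`, so `m = n = 0` because `g₃` has infinite order. The latter is seen in
`SL₃(ℤ)`, where `g₃` acts as the elementary matrix `1 + E₁₃`.
-/

/-- The relations of the group `H(r)`: generators `g₁ = of 0`, `g₂ = of 1`, `g₃ = of 2`
subject to `g₃g₁ = g₁g₃`, `g₃g₂ = g₂g₃` and `g₁⁻¹g₂⁻¹g₁g₂ = g₃ʳ`. -/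
def InoueHeisenbergRels (r : ℤ) : Set (FreeGroup (Fin 3)) :=
  { FreeGroup.of 2 * FreeGroup.of 0 * (FreeGroup.of 0 * FreeGroup.of 2)⁻¹,
    FreeGroup.of 2 * FreeGroup.of 1 * (FreeGroup.of 1 * FreeGroup.of 2)⁻¹,
    (FreeGroup.of 0)⁻¹ * (FreeGroup.of 1)⁻¹ * FreeGroup.of 0 * FreeGroup.of 1 *
      ((FreeGroup.of 2) ^ r)⁻¹ }

open scoped commutatorElement

open Matrix.SpecialLinearGroup (transvection transvection_add transvection_coe
  transvection_coeff_zero transvection_mem_center_iff)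

theorem isOfFinOrder_of_zpow {G : Type*} [Group G] {x : G} {n : ℤ} (hn : n ≠ 0)
    (h : IsOfFinOrder (x ^ n)) : IsOfFinOrder x := by
  obtain ⟨m, hm, hpow⟩ := isOfFinOrder_iff_zpow_eq_one.mp h
  exact isOfFinOrder_iff_zpow_eq_one.mpr ⟨n * m, mul_ne_zero hn hm, by rw [zpow_mul, hpow]⟩

section CentralCommutator

variable {G : Type*} [Group G] {x y : G}

theorem commutatorElement_zpow_left (h : Commute ⁅x, y⁆ x) (n : ℤ) : ⁅x ^ n, y⁆ = ⁅x, y⁆ ^ n :=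
  calc ⁅x ^ n, y⁆ = x ^ n * (y * x⁻¹ * y⁻¹) ^ n := by
        rw [commutatorElement_def, conj_zpow, inv_zpow]; group
    _ = x ^ n * (x⁻¹ * ⁅x, y⁆) ^ n := by rw [commutatorElement_def]; group
    _ = ⁅x, y⁆ ^ n := by rw [h.symm.inv_left.mul_zpow, inv_zpow, mul_inv_cancel_left]

theorem eq_zero_of_commute_zpow_left (hcomm : Commute ⁅x, y⁆ x) (hord : ¬IsOfFinOrder ⁅x, y⁆)
    {n : ℤ} (h : Commute (x ^ n) y) : n = 0 := by
  by_contra hn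
  refine hord (isOfFinOrder_iff_zpow_eq_one.mpr ⟨n, hn, ?_⟩)
  rw [← commutatorElement_zpow_left hcomm, h.commutator_eq]

theorem eq_zero_of_zpow_mul_zpow_mem_center (hcenter : ⁅x, y⁆ ∈ Subgroup.center G)
    (hord : ¬IsOfFinOrder ⁅x, y⁆) {m n : ℤ} (h : x ^ m * y ^ n ∈ Subgroup.center G) :
    m = 0 ∧ n = 0 := by
  have hx : Commute (x ^ m) y := by
    have hmul : Commute (x ^ m * y ^ n) y := (Subgroup.mem_center_iff.mp h y).symm
    simpa using hmul.mul_left ((Commute.refl y).zpow_left (-n))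
  have hy : Commute (y ^ n) x := by
    have hmul : Commute (x ^ m * y ^ n) x := (Subgroup.mem_center_iff.mp h x).symm
    simpa using ((Commute.refl x).zpow_left (-m)).mul_left hmul
  have hcomm : Commute ⁅x, y⁆ x := (Subgroup.mem_center_iff.mp hcenter x).symm
  have hcomm' : Commute ⁅y, x⁆ y := by
    rw [← commutatorElement_inv]
    exact Commute.inv_left (Subgroup.mem_center_iff.mp hcenter y).symm
  have hord' : ¬IsOfFinOrder ⁅y, x⁆ := by
    rwa [← commutatorElement_inv, isOfFinOrder_inv_iff]
  exact ⟨eq_zero_of_commute_zpow_left hcomm hord hx, eq_zero_of_commute_zpow_left hcomm' hord' hy⟩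

end CentralCommutator

section ZPowersProd

variable {G : Type*} [Group G] {x y : G}

/-- The homomorphism `(m, n) ↦ x ^ m * y ^ n` from `ℤ × ℤ` determined by two commuting elements. -/
def zpowersProdHom (h : Commute x y) : Multiplicative (ℤ × ℤ) →* G :=
  have hcomm (m n : Multiplicative ℤ) : Commute (zpowersHom G x m) (zpowersHom G y n) := by
    simpa only [zpowersHom_apply] using h.zpow_zpow m.toAdd n.toAdd
  ((zpowersHom G x).noncommCoprod (zpowersHom G y) hcomm).comp
    (MulEquiv.prodMultiplicative (G := ℤ) (H := ℤ)).toMonoidHom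

theorem zpowersProdHom_apply (h : Commute x y) (p : Multiplicative (ℤ × ℤ)) :
    zpowersProdHom h p = x ^ p.toAdd.1 * y ^ p.toAdd.2 :=
  rfl

theorem range_zpowersProdHom (h : Commute x y) :
    (zpowersProdHom h).range = Subgroup.zpowers x ⊔ Subgroup.zpowers y := by
  rw [zpowersProdHom, MonoidHom.range_comp, MonoidHom.range_eq_top.mpr (MulEquiv.surjective _),
    ← MonoidHom.range_eq_map, MonoidHom.noncommCoprod_range, Subgroup.range_zpowersHom,
    Subgroup.range_zpowersHom]

end ZPowersProd

theorem nonempty_quotient_center_mulEquiv_int_prod_int {G : Type*} [Group G] {x y : G}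
    (hgen : Subgroup.zpowers x ⊔ Subgroup.zpowers y ⊔ Subgroup.center G = ⊤)
    (hcenter : ⁅x, y⁆ ∈ Subgroup.center G) (hord : ¬IsOfFinOrder ⁅x, y⁆) :
    Nonempty (G ⧸ Subgroup.center G ≃* Multiplicative (ℤ × ℤ)) := by
  let q := QuotientGroup.mk' (Subgroup.center G)
  have hcomm : Commute (q x) (q y) := by
    rw [← commutatorElement_eq_one_iff_commute, ← map_commutatorElement]
    exact (QuotientGroup.eq_one_iff _).mpr hcenter
  have hinj : Function.Injective (zpowersProdHom hcomm) := by
    refine (injective_iff_map_eq_one _).mpr fun p hp ↦ ?_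
    rw [zpowersProdHom_apply, ← map_zpow, ← map_zpow, ← map_mul] at hp
    obtain ⟨hm, hn⟩ :=
      eq_zero_of_zpow_mul_zpow_mem_center hcenter hord ((QuotientGroup.eq_one_iff _).mp hp)
    exact Multiplicative.toAdd.injective (Prod.ext hm hn)
  have hsurj : Function.Surjective (zpowersProdHom hcomm) := by
    have hmap := congrArg (Subgroup.map q) hgen
    rw [Subgroup.map_sup, Subgroup.map_sup, MonoidHom.map_zpowers, MonoidHom.map_zpowers,
      QuotientGroup.map_mk'_self, sup_bot_eq, ← MonoidHom.range_eq_map,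
      QuotientGroup.range_mk'] at hmap
    rw [← MonoidHom.range_eq_top, range_zpowersProdHom, hmap]
  exact ⟨(MulEquiv.ofBijective _ ⟨hinj, hsurj⟩).symm⟩

section Transvection

variable {ι R : Type*} [DecidableEq ι] [Fintype ι] [CommRing R] {i j k l : ι}

theorem commute_transvection (hij : i ≠ j) (hkl : k ≠ l) (hjk : j ≠ k) (hil : i ≠ l) (a b : R) :
    Commute (transvection hij a) (transvection hkl b) :=
  Subtype.ext <| by
    simp only [Matrix.SpecialLinearGroup.coe_mul, transvection_coe, mul_add, mul_one, add_mul,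
      one_mul, Matrix.single_mul_single_of_ne _ _ _ _ hjk,
      Matrix.single_mul_single_of_ne _ _ _ _ hil.symm]
    abel

theorem commutatorElement_transvection (hij : i ≠ j) (hjk : j ≠ k) (hik : i ≠ k) (a b : R) :
    ⁅transvection hij a, transvection hjk b⁆ = transvection hik (a * b) := by
  rw [commutatorElement_def, mul_inv_eq_iff_eq_mul, mul_inv_eq_iff_eq_mul]
  refine Subtype.ext ?_
  simp only [Matrix.SpecialLinearGroup.coe_mul, transvection_coe, mul_add, mul_one, add_mul,
    one_mul, Matrix.single_mul_single_same, Matrix.single_mul_single_of_ne _ _ _ _ hjk.symm,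
    Matrix.single_mul_single_of_ne _ _ _ _ hik.symm, add_zero]
  abel

theorem transvection_zpow (hij : i ≠ j) (a : R) (n : ℤ) :
    transvection hij a ^ n = transvection hij (n • a) :=
  let f : Multiplicative R →* Matrix.SpecialLinearGroup ι R :=
    { toFun b := transvection hij b.toAdd
      map_one' := transvection_coeff_zero hij
      map_mul' b c := transvection_add hij b.toAdd c.toAdd }
  (map_zpow f (.ofAdd a) n).symm

theorem not_isOfFinOrder_transvection [IsAddTorsionFree R] (hij : i ≠ j) {a : R} (ha : a ≠ 0) :
    ¬IsOfFinOrder (transvection hij a) := by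
  rw [isOfFinOrder_iff_zpow_eq_one]
  rintro ⟨n, hn, h⟩
  have hna : n • a = 0 := by
    rw [← transvection_mem_center_iff hij, ← transvection_zpow, h]
    exact one_mem _
  exact (smul_ne_zero hn ha) hna

end Transvection

/-- The group `H(r)`; its generators `g₁`, `g₂`, `g₃` are `.of 0`, `.of 1`, `.of 2`. -/
abbrev InoueHeisenberg (r : ℤ) : Type :=
  PresentedGroup (InoueHeisenbergRels r)

namespace InoueHeisenberg

open PresentedGroup (of)

variable {r : ℤ}

theorem commute_of_two_of_zero : Commute (of 2 : InoueHeisenberg r) (of 0) :=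
  PresentedGroup.mk_eq_mk_of_mul_inv_mem (Or.inl rfl)

theorem commute_of_two_of_one : Commute (of 2 : InoueHeisenberg r) (of 1) :=
  PresentedGroup.mk_eq_mk_of_mul_inv_mem (Or.inr (Or.inl rfl))

theorem commutatorElement_inv_of_zero_inv_of_one :
    ⁅(of 0 : InoueHeisenberg r)⁻¹, (of 1 : InoueHeisenberg r)⁻¹⁆ = of 2 ^ r := by
  rw [commutatorElement_def, inv_inv, inv_inv]
  exact PresentedGroup.mk_eq_mk_of_mul_inv_mem (Or.inr (Or.inr rfl))

theorem of_two_mem_center : (of 2 : InoueHeisenberg r) ∈ Subgroup.center (InoueHeisenberg r) := by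
  rw [Subgroup.mem_center_iff]
  intro g
  rw [← Subgroup.mem_centralizer_singleton_iff]
  refine PresentedGroup.generated_by _ _ (fun i ↦ ?_) g
  rw [Subgroup.mem_centralizer_singleton_iff]
  fin_cases i
  exacts [commute_of_two_of_zero.symm, commute_of_two_of_one.symm, rfl]

theorem zpowers_sup_zpowers_sup_center :
    Subgroup.zpowers (of 0) ⊔ Subgroup.zpowers (of 1) ⊔ Subgroup.center (InoueHeisenberg r) =
      ⊤ := by
  refine (Subgroup.eq_top_iff' _).mpr (PresentedGroup.generated_by _ _ fun i ↦ ?_)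
  fin_cases i
  · exact Subgroup.mem_sup_left (Subgroup.mem_sup_left (Subgroup.mem_zpowers _))
  · exact Subgroup.mem_sup_left (Subgroup.mem_sup_right (Subgroup.mem_zpowers _))
  · exact Subgroup.mem_sup_right of_two_mem_center

/-- Images of `g₁`, `g₂`, `g₃` in `SL₃(ℤ)`: the elementary matrices `1 - r E₁₂`, `1 - E₂₃`,
`1 + E₁₃`. Taking `g₁` and `g₂` to inverses of transvections turns the relation
`⁅g₁⁻¹, g₂⁻¹⁆ = g₃ʳ` into the Steinberg relation for those transvections. -/
def matrixGen (r : ℤ) : Fin 3 → Matrix.SpecialLinearGroup (Fin 3) ℤ :=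
  ![(transvection (i := 0) (j := 1) (by decide) r)⁻¹,
    (transvection (i := 1) (j := 2) (by decide) 1)⁻¹,
    transvection (i := 0) (j := 2) (by decide) 1]

theorem lift_matrixGen_eq_one :
    ∀ w ∈ InoueHeisenbergRels r, FreeGroup.lift (matrixGen r) w = 1 := by
  rintro w (rfl | rfl | rfl) <;>
    simp only [map_mul, map_inv, map_zpow, FreeGroup.lift_apply_of, mul_inv_eq_one]
  · exact (commute_transvection (by decide) (by decide) (by decide) (by decide) 1 r).inv_right
  · exact (commute_transvection (by decide) (by decide) (by decide) (by decide) 1 1).inv_right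
  · simpa [matrixGen, transvection_zpow, commutatorElement_def] using
      commutatorElement_transvection (i := (0 : Fin 3)) (j := 1) (k := 2)
        (by decide) (by decide) (by decide) r 1

/-- The representation of `H(r)` by unipotent integer matrices, which detects that `g₃` has infinite
order. -/
def toSpecialLinearGroup (r : ℤ) : InoueHeisenberg r →* Matrix.SpecialLinearGroup (Fin 3) ℤ :=
  PresentedGroup.toGroup lift_matrixGen_eq_one

theorem not_isOfFinOrder_of_two : ¬IsOfFinOrder (of 2 : InoueHeisenberg r) := fun h ↦ by
  have hmap := (toSpecialLinearGroup r).isOfFinOrder h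
  rw [toSpecialLinearGroup, PresentedGroup.toGroup.of] at hmap
  exact not_isOfFinOrder_transvection (by decide) one_ne_zero hmap

end InoueHeisenberg

/-- For `r ≠ 0`, the quotient of `H(r)` by its center is isomorphic to `ℤ × ℤ`. -/
theorem InoueHeisenberg_quotient_center_iso_int_prod_int (r : ℤ) (hr : r ≠ 0) :
    Nonempty ((PresentedGroup (InoueHeisenbergRels r) ⧸
        Subgroup.center (PresentedGroup (InoueHeisenbergRels r)))
      ≃* Multiplicative (ℤ × ℤ)) := by
  refine nonempty_quotient_center_mulEquiv_int_prod_int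
    (x := (PresentedGroup.of 0)⁻¹) (y := (PresentedGroup.of 1)⁻¹) ?_ ?_ ?_
  · rw [Subgroup.zpowers_inv, Subgroup.zpowers_inv]
    exact InoueHeisenberg.zpowers_sup_zpowers_sup_center
  · rw [InoueHeisenberg.commutatorElement_inv_of_zero_inv_of_one]
    exact zpow_mem InoueHeisenberg.of_two_mem_center r
  · rw [InoueHeisenberg.commutatorElement_inv_of_zero_inv_of_one]
    exact fun h ↦ InoueHeisenberg.not_isOfFinOrder_of_two (isOfFinOrder_of_zpow hr h)
end
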